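/- arXiv:1912.08460 — 3 statements merged into one kernel-verified Lean document; each statement's English description precedes it below -/
import Mathlib

section
/- Let M, N ≥ 1 and let b : Fin M → Matrix (Fin N) (Fin N) ℂ. Let B be the block circulant matrix of block size N with blocks b, with entries B_{(i,p),(j,q)} = (b_{(j−i) mod M})_{p,q}, and for 0 ≤ m < M let ρ_m = exp(2πi·m/M) and B_m = ∑_{k=0}^{M−1} ρ_m^k • b_k. Then the characteristic polynomial of B is the product of the characteristic polynomials of the B_m: charpoly(B) = ∏_{m=0}^{M−1} charpoly(B_m). In particular, the eigenvalues of the (MN)×(MN) matrix B, with multiplicity, are exactly the eigenvalues of the M matrices B_m of size N×N. -/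
/-!
For each `M`-th root of unity `z`, block circulance gives
`∑ j, z ^ j • b (j - i) = z ^ i • ∑ k, z ^ k • b k`, by substituting `k = j - i`.
Hence the Vandermonde matrix of the roots `ρ_m`, tensored with the identity of size `N`,
intertwines `B` with the block diagonal matrix with blocks `B_m`. The `ρ_m` are distinct, so the
Vandermonde matrix is invertible and the two matrices are similar; the characteristic polynomial
of a block diagonal matrix is the product of those of its blocks.

The index set is swapped to `Fin N × Fin M` to match Mathlib's `Matrix.blockDiagonal`.
-/

open Matrix Kronecker

theorem charpoly_blockDiagonal_eq_prod {n o R : Type*} [Fintype n] [DecidableEq n] [Fintype o]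
    [DecidableEq o] [CommRing R] (D : o → Matrix n n R) :
    (blockDiagonal D).charpoly = ∏ k, (D k).charpoly := by
  have h : (blockDiagonal D).charmatrix = blockDiagonal fun k => (D k).charmatrix := by
    ext ⟨i, k⟩ ⟨j, l⟩
    by_cases hkl : k = l
    · subst hkl
      by_cases hij : i = j <;>
        simp [blockDiagonal_apply, hij]
    · simp [blockDiagonal_apply, hkl]
  simp only [Matrix.charpoly, h, det_blockDiagonal]

/-- Multiplicativity of `i ↦ z ^ i` on `Fin M`, where subtraction is modulo `M`. -/
theorem pow_mul_pow_fin_sub {M : ℕ} {z : ℂ} (hz : z ^ M = 1) (i j : Fin M) :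
    z ^ (i : ℕ) * z ^ ((j - i : Fin M) : ℕ) = z ^ (j : ℕ) := by
  have hi := i.isLt
  rw [Fin.sub_def]
  simp only
  rw [← pow_eq_pow_mod _ hz, ← pow_add, show (i : ℕ) + (M - i + j) = M + j by omega, pow_add, hz,
    one_mul]

theorem root_pow_eq_one (M : ℕ) (hM : 1 ≤ M) (m : Fin M) :
    Complex.exp (2 * Real.pi * Complex.I * (m : ℕ) / (M : ℕ)) ^ M = 1 := by
  have hM0 : (M : ℂ) ≠ 0 := by exact_mod_cast (by omega : M ≠ 0)
  rw [← Complex.exp_nat_mul, mul_div_cancel₀ _ hM0, mul_comm]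
  exact Complex.exp_nat_mul_two_pi_mul_I _

theorem root_injective (M : ℕ) (hM : 1 ≤ M) :
    Function.Injective fun m : Fin M =>
      Complex.exp (2 * Real.pi * Complex.I * (m : ℕ) / (M : ℕ)) := by
  have hζ := Complex.isPrimitiveRoot_exp M (by omega)
  have hpow (m : Fin M) : Complex.exp (2 * Real.pi * Complex.I * (m : ℕ) / (M : ℕ)) =
      Complex.exp (2 * Real.pi * Complex.I / M) ^ (m : ℕ) := by
    rw [← Complex.exp_nat_mul]
    ring_nf
  intro m m' h
  simp only [hpow] at h
  exact Fin.ext (hζ.pow_inj m.isLt m'.isLt h)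

/-- The characteristic polynomial of the block circulant matrix
`B_{(i,p),(j,q)} = (b_{(j−i) mod M})_{p,q}` is the product of the characteristic
polynomials of the matrices `B_m = ∑_k ρ_m^k • b_k`, `ρ_m = exp(2πi·m/M)`;
in particular the eigenvalues of `B`, with multiplicity, are exactly those of
the `M` matrices `B_m`. -/
theorem block_circulant_charpoly (M N : ℕ) (hM : 1 ≤ M) (hN : 1 ≤ N)
    (b : Fin M → Matrix (Fin N) (Fin N) ℂ)
    (B : Matrix (Fin M × Fin N) (Fin M × Fin N) ℂ)
    (hB : ∀ (i j : Fin M) (p q : Fin N), B (i, p) (j, q) = b (j - i) p q) :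
    B.charpoly = ∏ m : Fin M,
      (∑ k : Fin M,
        Complex.exp (2 * Real.pi * Complex.I * (m : ℕ) / (M : ℕ)) ^ (k : ℕ) • b k).charpoly := by
  have : NeZero M := ⟨by omega⟩
  set ρ : Fin M → ℂ := fun m => Complex.exp (2 * Real.pi * Complex.I * (m : ℕ) / (M : ℕ)) with hρ
  set D : Fin M → Matrix (Fin N) (Fin N) ℂ := fun m => ∑ k : Fin M, ρ m ^ (k : ℕ) • b k with hD
  let A := B.reindex (Equiv.prodComm _ _) (Equiv.prodComm _ _)
  let K : Matrix (Fin N × Fin M) (Fin N × Fin M) ℂ := 1 ⊗ₖ (vandermonde ρ)ᵀ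
  have hK : IsUnit K := by
    rw [isUnit_iff_isUnit_det, isUnit_iff_ne_zero]
    simp only [K, det_kronecker, det_one, one_pow, one_mul, det_transpose]
    exact pow_ne_zero _ (det_vandermonde_ne_zero_iff.mpr (root_injective M hM))
  have hAK : A * K = K * blockDiagonal D := by
    ext ⟨p, i⟩ ⟨q, m⟩
    have hL : (A * K) (p, i) (q, m) = ∑ j, b (j - i) p q * ρ m ^ (j : ℕ) := by
      simp [mul_apply, Fintype.sum_prod_type, A, K, hB, one_apply, vandermonde_apply]
    have hR : (K * blockDiagonal D) (p, i) (q, m) = ρ m ^ (i : ℕ) * D m p q := by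
      simp [mul_apply, Fintype.sum_prod_type, K, one_apply, vandermonde_apply,
        blockDiagonal_apply]
    rw [hL, hR, hD]
    simp only [Matrix.sum_apply, Matrix.smul_apply, smul_eq_mul, Finset.mul_sum]
    rw [← Equiv.sum_comp (Equiv.subRight i) fun k : Fin M =>
      ρ m ^ (i : ℕ) * (ρ m ^ (k : ℕ) * b k p q)]
    refine Finset.sum_congr rfl fun j _ => ?_
    rw [Equiv.subRight_apply, ← mul_assoc, pow_mul_pow_fin_sub (root_pow_eq_one M hM m), mul_comm]
  obtain ⟨U, hU⟩ := hK
  have hA : A = U.val * blockDiagonal D * U⁻¹.val := by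
    rw [hU, ← hAK, ← hU, mul_assoc, Units.mul_inv, mul_one]
  calc B.charpoly = A.charpoly := (charpoly_reindex _ _).symm
    _ = (blockDiagonal D).charpoly := by rw [hA, coe_units_inv, charpoly_units_conj]
    _ = ∏ m, (D m).charpoly := charpoly_blockDiagonal_eq_prod D
end

section
/- Let M, N ≥ 1 and let b : Fin M → Matrix (Fin N) (Fin N) ℂ. Let B be the block circulant matrix of block size N with blocks b, with entries B_{(i,p),(j,q)} = (b_{(j−i) mod M})_{p,q}, and for 0 ≤ m < M let ρ_m = exp(2πi·m/M) and B_m = ∑_{k=0}^{M−1} ρ_m^k • b_k. Then det(B) = ∏_{m=0}^{M−1} det(B_m). -/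
/-!
The discrete Fourier transform block-diagonalises `B`. Let `F` be the Fourier matrix
`F_{j,m} = ρ_m ^ j`, the transpose of the Vandermonde matrix of the `M`-th roots of unity. Since
`ρ_m ^ M = 1`, the function `j ↦ ρ_m ^ j` is additive in `j : Fin M`, so the substitution
`j = k + i` gives `B * (F ⊗ 1) = (F ⊗ 1) * D`, where `D` is block diagonal with blocks `B_m`.
As the `ρ_m` are distinct, `F ⊗ 1` has nonzero determinant, which cancels from the two sides.
-/

open scoped Kronecker

/-- The exponent on an `M`-th root of unity may be reduced modulo `M`, so that it defines a
character of `Fin M`. -/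
lemma pow_fin_add {M : ℕ} {z : ℂ} (hz : z ^ M = 1) (k i : Fin M) :
    z ^ ((k + i : Fin M) : ℕ) = z ^ (k : ℕ) * z ^ (i : ℕ) := by
  rw [Fin.val_add, ← pow_eq_pow_mod _ hz, pow_add]

/-- The diagonalisation argument holds for any injective family `ρ` of `M`-th roots of unity. -/
lemma det_eq_prod_of_roots {M N : ℕ} (b : Fin M → Matrix (Fin N) (Fin N) ℂ)
    (B : Matrix (Fin M × Fin N) (Fin M × Fin N) ℂ)
    (hB : ∀ (i j : Fin M) (p q : Fin N), B (i, p) (j, q) = b (j - i) p q)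
    (ρ : Fin M → ℂ) (hρ : Function.Injective ρ) (hρM : ∀ m, ρ m ^ M = 1) :
    B.det = ∏ m : Fin M, (∑ k : Fin M, ρ m ^ (k : ℕ) • b k).det := by
  set F := (Matrix.vandermonde ρ).transpose with hF
  set P : Matrix (Fin M × Fin N) (Fin M × Fin N) ℂ := F ⊗ₖ (1 : Matrix (Fin N) (Fin N) ℂ) with hP
  -- `blockDiagonal` puts the block index second, hence the swap.
  set D := (Matrix.blockDiagonal fun m : Fin M => ∑ k : Fin M, ρ m ^ (k : ℕ) • b k).submatrix
    (Equiv.prodComm (Fin M) (Fin N)) (Equiv.prodComm (Fin M) (Fin N)) with hD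
  have hPdet : P.det ≠ 0 := by
    rw [hP, Matrix.det_kronecker, hF, Matrix.det_transpose, Matrix.det_one, one_pow, mul_one]
    exact pow_ne_zero _ (Matrix.det_vandermonde_ne_zero_iff.mpr hρ)
  have key : B * P = P * D := by
    ext ⟨i, p⟩ ⟨m, q⟩
    have hM : NeZero M := ⟨fun h => by subst h; exact i.elim0⟩
    have hL : (B * P) (i, p) (m, q) = ∑ j : Fin M, b (j - i) p q * ρ m ^ (j : ℕ) := by
      simp [Matrix.mul_apply, Fintype.sum_prod_type, hP, hF, hB, Matrix.one_apply,
        Matrix.vandermonde_apply]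
    have hR : (P * D) (i, p) (m, q) = ρ m ^ (i : ℕ) * ∑ k : Fin M, ρ m ^ (k : ℕ) * b k p q := by
      simp [Matrix.mul_apply, Fintype.sum_prod_type, hP, hF, hD, Matrix.one_apply,
        Matrix.vandermonde_apply, Matrix.blockDiagonal_apply, Matrix.sum_apply]
    rw [hL, hR, ← Equiv.sum_comp (Equiv.addRight i), Finset.mul_sum]
    refine Finset.sum_congr rfl fun k _ => ?_
    rw [Equiv.coe_addRight, add_sub_cancel_right, pow_fin_add (hρM m)]
    ring
  have hdet := congrArg Matrix.det key
  rw [Matrix.det_mul, Matrix.det_mul, mul_comm] at hdet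
  rw [mul_left_cancel₀ hPdet hdet, hD, Matrix.det_submatrix_equiv_self,
    Matrix.det_blockDiagonal]


/-- The determinant of the block circulant matrix
`B_{(i,p),(j,q)} = (b_{(j−i) mod M})_{p,q}` equals the product of the
determinants of the matrices `B_m = ∑_k ρ_m^k • b_k`, `ρ_m = exp(2πi·m/M)`. -/
theorem block_circulant_det (M N : ℕ) (hM : 1 ≤ M) (hN : 1 ≤ N)
    (b : Fin M → Matrix (Fin N) (Fin N) ℂ)
    (B : Matrix (Fin M × Fin N) (Fin M × Fin N) ℂ)
    (hB : ∀ (i j : Fin M) (p q : Fin N), B (i, p) (j, q) = b (j - i) p q) :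
    B.det = ∏ m : Fin M,
      (∑ k : Fin M,
        Complex.exp (2 * Real.pi * Complex.I * (m : ℕ) / (M : ℕ)) ^ (k : ℕ) • b k).det := by
  have hM0 : M ≠ 0 := by omega
  have hprim := Complex.isPrimitiveRoot_exp M hM0
  have hexp : ∀ m : Fin M, Complex.exp (2 * Real.pi * Complex.I * (m : ℕ) / (M : ℕ)) =
      Complex.exp (2 * Real.pi * Complex.I / (M : ℕ)) ^ (m : ℕ) := fun m => by
    rw [← Complex.exp_nat_mul]
    congr 1
    ring
  refine det_eq_prod_of_roots b B hB _ (fun m n h => ?_) (fun m => ?_)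
  · simp only [hexp] at h
    exact Fin.ext (hprim.pow_inj m.isLt n.isLt h)
  · rw [hexp, pow_right_comm, hprim.pow_eq_one, one_pow]
end

section
/- Let M, N ≥ 1, let T be an invertible N×N complex matrix with T^M = I_N, let C : Fin M → Matrix (Fin N) (Fin N) ℂ, and let A be the (MN)×(MN) matrix indexed by Fin M × Fin N whose (i,j) block is T^i · C_{(j−i) mod M} · T^{−i}. Fix m with 0 ≤ m < M, let ρ_m = exp(2πi·m/M) and B_m = ∑_{k=0}^{M−1} ρ_m^k • (C_k · T^k). If v ∈ ℂ^N satisfies B_m · v = λ • v for some λ ∈ ℂ, then the vector u ∈ ℂ^{M×N} defined by u_{(k,p)} = ρ_m^k · (T^k · v)_p satisfies A · u = λ • u. -/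
/-!
Write `u_j = ρ ^ j • T ^ j v` for the block of `u` in sector `j`. Both `ρ` and `T` have `M`-th power
`1`, so the exponents only matter modulo `M`. Row block `i` of `A u` is
`∑ j, T ^ i C_{j - i} T⁻¹ ^ i u_j`, and the substitution `j = k + i` makes each summand
`ρ ^ i • T ^ i (ρ ^ k • C_k T ^ k) v` (`sector_summand`). The sum is therefore
`ρ ^ i • T ^ i B_m v = lam • u_i`.
-/

/-- The contribution of sector `k + i` to row block `i`, as a matrix acting on `v`: the conjugation by
`T ^ i` cancels against the phase shift of the mode, leaving the `k`-th term of `B_m`. -/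
lemma sector_summand {M N : ℕ} (T : Matrix (Fin N) (Fin N) ℂ) (hT : IsUnit T) (hTM : T ^ M = 1)
    (ρ : ℂ) (hρM : ρ ^ M = 1) (D : Matrix (Fin N) (Fin N) ℂ) (i k : Fin M) :
    (T ^ (i : ℕ) * D * T⁻¹ ^ (i : ℕ)) * (ρ ^ ((k + i : Fin M) : ℕ) • T ^ ((k + i : Fin M) : ℕ)) =
      (ρ ^ (i : ℕ) • T ^ (i : ℕ)) * (ρ ^ (k : ℕ) • (D * T ^ (k : ℕ))) := by
  have hinv : T⁻¹ ^ (i : ℕ) * T ^ (i : ℕ) = 1 := by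
    rw [Matrix.inv_pow', Matrix.nonsing_inv_mul]
    exact (Matrix.isUnit_iff_isUnit_det _).1 (hT.pow _)
  rw [Fin.val_add, ← pow_eq_pow_mod _ hρM, ← pow_eq_pow_mod _ hTM, add_comm (k : ℕ), pow_add, pow_add]
  simp only [Matrix.mul_smul, Matrix.smul_mul, smul_smul, mul_assoc]
  rw [← mul_assoc (T⁻¹ ^ (i : ℕ)), hinv, one_mul, mul_comm (ρ ^ (i : ℕ))]


/-- If `v` is an eigenvector of the single-sector matrix
`B_m = ∑_k ρ_m^k • (C_k · T^k)` with eigenvalue `λ`, then the whole-annulus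
vector `u_{(k,p)} = ρ_m^k · (T^k v)_p` is an eigenvector, with the same
eigenvalue, of the matrix `A` whose `(i,j)` block is
`T^i · C_{(j−i) mod M} · T^{−i}`, where `T^M = I`. -/
theorem annulus_eigenvector_from_sector (M N : ℕ) (hM : 1 ≤ M) (hN : 1 ≤ N)
    (T : Matrix (Fin N) (Fin N) ℂ) (hT : IsUnit T) (hTM : T ^ M = 1)
    (C : Fin M → Matrix (Fin N) (Fin N) ℂ)
    (A : Matrix (Fin M × Fin N) (Fin M × Fin N) ℂ)
    (hA : ∀ (i j : Fin M) (p q : Fin N),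
      A (i, p) (j, q) = (T ^ (i : ℕ) * C (j - i) * T⁻¹ ^ (i : ℕ)) p q)
    (m : Fin M) (ρ : ℂ)
    (hρ : ρ = Complex.exp (2 * Real.pi * Complex.I * (m : ℕ) / (M : ℕ)))
    (lam : ℂ) (v : Fin N → ℂ)
    (hv : (∑ k : Fin M, ρ ^ (k : ℕ) • (C k * T ^ (k : ℕ))).mulVec v = lam • v)
    (u : Fin M × Fin N → ℂ)
    (hu : ∀ (k : Fin M) (p : Fin N),
      u (k, p) = ρ ^ (k : ℕ) * (T ^ (k : ℕ)).mulVec v p) :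
    A.mulVec u = lam • u := by
  have : NeZero M := ⟨by omega⟩
  have hρM : ρ ^ M = 1 := by
    rw [hρ, ← Complex.exp_nat_mul, Complex.exp_eq_one_iff]
    refine ⟨(m : ℕ), ?_⟩
    have : (M : ℂ) ≠ 0 := NeZero.ne _
    push_cast
    field_simp
  have hublock : ∀ j : Fin M,
      (fun q => u (j, q)) = (ρ ^ (j : ℕ) • T ^ (j : ℕ)).mulVec v := by
    intro j
    ext q
    rw [hu, Matrix.smul_mulVec, Pi.smul_apply, smul_eq_mul]
  have hrow : ∀ i : Fin M, (fun p => A.mulVec u (i, p)) =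
      ∑ j : Fin M, (T ^ (i : ℕ) * C (j - i) * T⁻¹ ^ (i : ℕ)).mulVec (fun q => u (j, q)) := by
    intro i
    ext p
    simp only [Matrix.mulVec, dotProduct, Fintype.sum_prod_type, Finset.sum_apply, hA]
  have hmain : ∀ i : Fin M, (fun p => A.mulVec u (i, p)) = lam • fun p => u (i, p) := by
    intro i
    calc (fun p => A.mulVec u (i, p))
        = ∑ k : Fin M, (T ^ (i : ℕ) * C k * T⁻¹ ^ (i : ℕ)).mulVec (fun q => u (k + i, q)) := by
          rw [hrow, ← Equiv.sum_comp (Equiv.addRight i)]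
          simp only [Equiv.coe_addRight, add_sub_cancel_right]
      _ = ∑ k : Fin M, ((ρ ^ (i : ℕ) • T ^ (i : ℕ)) *
            (ρ ^ (k : ℕ) • (C k * T ^ (k : ℕ)))).mulVec v := by
          refine Finset.sum_congr rfl fun k _ => ?_
          rw [hublock, Matrix.mulVec_mulVec, sector_summand T hT hTM ρ hρM]
      _ = lam • fun p => u (i, p) := by
          rw [← Matrix.sum_mulVec, ← Finset.mul_sum, ← Matrix.mulVec_mulVec, hv,
            Matrix.mulVec_smul, hublock]
  ext ⟨i, p⟩
  exact congrFun (hmain i) p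
end
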